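/- Let R be a henselian Gorenstein Noetherian local ring satisfying the Auslander–Reiten condition (ARC). Let 𝒳 be a resolving subcategory of the category of finitely generated R-modules all of whose members are maximal Cohen–Macaulay, and suppose 𝒳 satisfies condition (A): for every X ∈ 𝒳 there is a short exact sequence 0 → X → Y → X′ → 0 of finitely generated R-modules with X′ ∈ 𝒳 and Y ∈ 𝒳 ∩ 𝒳^⊥. Then 𝒳 is coherent. -/

import Mathlib

open CategoryTheory IsLocalRing

universe u

noncomputable section

/-- The `i`-th Ext module of two `R`-modules. -/
abbrev ExtMod (R : Type u) [CommRing R] (i : ℕ) (M N : ModuleCat.{u} R) : ModuleCat R :=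
  ((Ext R (ModuleCat.{u} R) i).obj (Opposite.op M)).obj N

/-- Vanishing of the `i`-th Ext module: `Ext_R^i(M, N) = 0`. -/
def ExtVanish (R : Type u) [CommRing R] (i : ℕ) (M N : ModuleCat.{u} R) : Prop :=
  Subsingleton (ExtMod R i M N)

variable (R : Type u) [CommRing R]

/-- `0 → A → B → C → 0` is a short exact sequence. -/
def IsSES {A B C : ModuleCat.{u} R} (f : A →ₗ[R] B) (g : B →ₗ[R] C) : Prop :=
  Function.Injective f ∧ Function.Exact f g ∧ Function.Surjective g

/-- A resolving subcategory of the category of finitely generated `R`-modules. -/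
structure IsResolving (𝒳 : Set (ModuleCat.{u} R)) : Prop where
  finite : ∀ M ∈ 𝒳, Module.Finite R M
  isoClosed : ∀ {M N : ModuleCat.{u} R}, M ∈ 𝒳 → (↥M ≃ₗ[R] ↥N) → N ∈ 𝒳
  freeMem : ∀ M : ModuleCat.{u} R, Module.Finite R M → Module.Free R M → M ∈ 𝒳
  summandClosed : ∀ M N : ModuleCat.{u} R, ModuleCat.of R (↥M × ↥N) ∈ 𝒳 → M ∈ 𝒳
  extClosed : ∀ (A B C : ModuleCat.{u} R) (f : A →ₗ[R] B) (g : B →ₗ[R] C),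
    IsSES R f g → A ∈ 𝒳 → C ∈ 𝒳 → B ∈ 𝒳
  kerClosed : ∀ (A B C : ModuleCat.{u} R) (f : A →ₗ[R] B) (g : B →ₗ[R] C),
    IsSES R f g → B ∈ 𝒳 → C ∈ 𝒳 → A ∈ 𝒳

/-- `f : X → M` is a right `𝒳`-approximation of `M`. -/
def IsRightApprox (𝒳 : Set (ModuleCat.{u} R)) {X M : ModuleCat.{u} R} (f : X →ₗ[R] M) : Prop :=
  X ∈ 𝒳 ∧ ∀ W ∈ 𝒳, ∀ g : ↥W →ₗ[R] ↥M, ∃ h : ↥W →ₗ[R] ↥X, f ∘ₗ h = g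

/-- `M` admits a right `𝒳`-approximation. -/
def HasRightApprox (𝒳 : Set (ModuleCat.{u} R)) (M : ModuleCat.{u} R) : Prop :=
  ∃ (X : ModuleCat.{u} R) (f : X →ₗ[R] M), IsRightApprox R 𝒳 f

/-- `𝒳` is contravariantly infinite: no finitely generated module outside `𝒳` admits
a right `𝒳`-approximation. -/
def ContravariantlyInfinite (𝒳 : Set (ModuleCat.{u} R)) : Prop :=
  ∀ M : ModuleCat.{u} R, Module.Finite R M → M ∉ 𝒳 → ¬ HasRightApprox R 𝒳 M

/-- `𝒳` is contravariantly finite: every finitely generated module admits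
a right `𝒳`-approximation. -/
def ContravariantlyFinite (𝒳 : Set (ModuleCat.{u} R)) : Prop :=
  ∀ M : ModuleCat.{u} R, Module.Finite R M → HasRightApprox R 𝒳 M

/-- The restricted functor `Hom_R(-, C)|_𝒳` is finitely presented, i.e. `C ∈ 𝒞(𝒳)`. -/
def MemCC (𝒳 : Set (ModuleCat.{u} R)) (C : ModuleCat.{u} R) : Prop :=
  ∃ (X₀ X₁ : ModuleCat.{u} R) (g : ↥X₁ →ₗ[R] ↥X₀) (f : ↥X₀ →ₗ[R] ↥C), X₀ ∈ 𝒳 ∧ X₁ ∈ 𝒳 ∧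
    ∀ W ∈ 𝒳, Function.Surjective (fun h : ↥W →ₗ[R] ↥X₀ => f ∘ₗ h) ∧
      Function.Exact (fun h : ↥W →ₗ[R] ↥X₁ => g ∘ₗ h) (fun h : ↥W →ₗ[R] ↥X₀ => f ∘ₗ h)

/-- `𝒳` is coherent: `𝒞(𝒳) = rap 𝒳`. -/
def Coherent (𝒳 : Set (ModuleCat.{u} R)) : Prop :=
  ∀ M : ModuleCat.{u} R, Module.Finite R M → (MemCC R 𝒳 M ↔ HasRightApprox R 𝒳 M)

/-- The right Ext-orthogonal class `𝒳^⊥` of a class `𝒳` of finitely generated modules. -/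
def XPerp (𝒳 : Set (ModuleCat.{u} R)) : Set (ModuleCat.{u} R) :=
  {Y | Module.Finite R Y ∧ ∀ X ∈ 𝒳, ∀ i, 0 < i → ExtVanish R i X Y}

/-- The projective dimension of `M` is at most `n`. -/
def ProjDimLE (M : ModuleCat.{u} R) (n : ℕ) : Prop :=
  ∀ N : ModuleCat.{u} R, ∀ i, n < i → ExtVanish R i M N

/-- The depth of an `R`-module over a local ring: `inf { i | Ext^i(k, M) ≠ 0 }`. -/
def moduleDepth [IsLocalRing R] (M : ModuleCat.{u} R) : ℕ∞ :=
  sInf ((fun i : ℕ => (i : ℕ∞)) ''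
    {i : ℕ | ¬ ExtVanish R i (ModuleCat.of R (ResidueField R)) M})

/-- `M` is a maximal Cohen–Macaulay `R`-module: `depth M ≥ dim R`. -/
def IsMCM [IsLocalRing R] (M : ModuleCat.{u} R) : Prop :=
  ringKrullDim R ≤ (moduleDepth R M : WithBot ℕ∞)

/-- A Gorenstein local ring: `∃ n, Ext^i(M, R) = 0` for every finitely generated `M`
and every `i > n`. -/
def IsGorensteinLocalRing : Prop :=
  ∃ n : ℕ, ∀ M : ModuleCat.{u} R, Module.Finite R M →
    ∀ i, n < i → ExtVanish R i M (ModuleCat.of R R)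

/-- A regular local ring: Noetherian local with `dim R = dim_k 𝔪/𝔪²`. -/
def IsRegularLocal [IsLocalRing R] : Prop :=
  IsNoetherianRing R ∧
    ringKrullDim R = (Module.finrank (ResidueField R) (CotangentSpace R) : ℕ)

/-- Witness that the local ring `R` is a complete intersection: its `𝔪`-adic completion
is `Q/(f₁, …, f_c)` for a regular local ring `Q` and a `Q`-regular sequence `f₁, …, f_c`. -/
structure CompleteIntersectionWitness [IsLocalRing R] : Type (u + 1) where
  Q : Type u
  [commRing : CommRing Q]
  [localRing : IsLocalRing Q]
  regular : IsRegularLocal Q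
  fs : List Q
  regSeq : RingTheory.Sequence.IsRegular Q fs
  equiv : AdicCompletion (maximalIdeal R) R ≃+* Q ⧸ Ideal.span {x : Q | x ∈ fs}

/-- The local ring `R` is a complete intersection. -/
def IsCompleteIntersection [IsLocalRing R] : Prop :=
  Nonempty (CompleteIntersectionWitness R)

end

/-!
Let `R` be Gorenstein and let `Y ∈ 𝒳 ∩ 𝒳^⊥`. Since `Y` is maximal Cohen–Macaulay,
`Ext^i(Y, R) = 0` for all `i > 0`, so (ARC) applies to `Y` and `Y` is free. Condition (A) thus
embeds each `W ∈ 𝒳` into a free module `Y` with cokernel in `𝒳`.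

Let `f : X → M` be a right `𝒳`-approximation, and let `h : W → ker f` with `W ∈ 𝒳`, embedded by
`i : W → Y` as above. The pushout `P` of `h : W → X` and `i`, with structure maps `a : X → P` and
`b : Y → P`, is an extension of `Y / W` by `X`, hence lies in `𝒳`, and `(f, 0) : P → M` lifts
through `f` to some `H : P → X`. Then `h = (1 - H a) h + (H b) i`, where both `1 - H a` and `H b`
take values in `ker f`. Hence finitely many generators of `ker f` and of `Hom(X, ker f)` yield a
right `𝒳`-approximation `R^n ⊕ X^m → ker f`, and `Hom(-, M)` is finitely presented on `𝒳`.

The vanishing of `Ext^i(Y, R)` rests on two facts. If `Ext^{i+1}(-, N) = 0` and `i > dim R`, then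
`Ext^i(-, N) = 0`: by prime filtrations and Nakayama's lemma it is enough to treat `k`, which embeds
into a finitely generated module of projective dimension at most `dim R`. And dividing `Y` by a
regular element of `𝔪` shifts the degree of its Ext by one, which can be repeated `depth Y` times.
-/

open Abelian

section LongExactSequence

universe v w

variable {C : Type v} [Category C] [Abelian C] [HasExt.{w} C] {S : ShortComplex C} {A : C} {i : ℕ}

lemma subsingleton_ext_X₁_of_shortExact (hS : S.ShortExact) [Subsingleton (Ext S.X₂ A i)]
    [Subsingleton (Ext S.X₃ A (i + 1))] : Subsingleton (Ext S.X₁ A i) := by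
  refine subsingleton_of_forall_eq 0 fun α ↦ ?_
  obtain ⟨β, rfl⟩ :=
    Ext.contravariant_sequence_exact₁ hS A α (add_comm 1 i) (Subsingleton.elim _ _)
  rw [Subsingleton.elim β 0, Ext.comp_zero]

lemma subsingleton_ext_X₂_of_shortExact (hS : S.ShortExact) [Subsingleton (Ext S.X₁ A i)]
    [Subsingleton (Ext S.X₃ A i)] : Subsingleton (Ext S.X₂ A i) := by
  refine subsingleton_of_forall_eq 0 fun α ↦ ?_
  obtain ⟨β, rfl⟩ := Ext.contravariant_sequence_exact₂ hS A α (Subsingleton.elim _ _)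
  rw [Subsingleton.elim β 0, Ext.comp_zero]

lemma subsingleton_ext_to_X₂_of_shortExact (hS : S.ShortExact) [Subsingleton (Ext A S.X₁ i)]
    [Subsingleton (Ext A S.X₃ i)] : Subsingleton (Ext A S.X₂ i) := by
  refine subsingleton_of_forall_eq 0 fun α ↦ ?_
  obtain ⟨β, rfl⟩ := Ext.covariant_sequence_exact₂ A hS α (Subsingleton.elim _ _)
  rw [Subsingleton.elim β 0, Ext.zero_comp]

lemma subsingleton_ext_to_X₃_of_shortExact (hS : S.ShortExact) [Subsingleton (Ext A S.X₂ i)]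
    [Subsingleton (Ext A S.X₁ (i + 1))] : Subsingleton (Ext A S.X₃ i) := by
  refine subsingleton_of_forall_eq 0 fun α ↦ ?_
  obtain ⟨β, rfl⟩ := Ext.covariant_sequence_exact₃ A hS α rfl (Subsingleton.elim _ _)
  rw [Subsingleton.elim β 0, Ext.zero_comp]

lemma subsingleton_ext_of_iso {A₁ A₂ B : C} (e : A₁ ≅ A₂) [Subsingleton (Ext A₂ B i)] :
    Subsingleton (Ext A₁ B i) := by
  refine subsingleton_of_forall_eq 0 fun α ↦ ?_
  rw [← Ext.mk₀_id_comp α, ← e.hom_inv_id, ← Ext.mk₀_comp_mk₀_assoc,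
    Subsingleton.elim ((Ext.mk₀ e.inv).comp α _) 0, Ext.comp_zero]

end LongExactSequence

section ExtVanishing

variable {R : Type u} [CommRing R] {M N : ModuleCat.{u} R}

lemma IsSES.shortExact {A B C : ModuleCat.{u} R} {f : A →ₗ[R] B} {g : B →ₗ[R] C}
    (h : IsSES R f g) :
    (ModuleCat.shortComplexOfCompEqZero f g h.2.1.linearMap_comp_eq_zero).ShortExact where
  exact := ModuleCat.shortComplex_exact _ h.2.1
  mono_f := (ModuleCat.mono_iff_injective _).2 h.1
  epi_g := (ModuleCat.epi_iff_surjective _).2 h.2.2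

lemma isSES_inl_snd (A B : ModuleCat.{u} R) :
    IsSES R (B := ModuleCat.of R (A × B)) (LinearMap.inl R A B) (LinearMap.snd R A B) :=
  ⟨LinearMap.inl_injective, Function.Exact.inl_snd, LinearMap.snd_surjective⟩

lemma subsingleton_ext_zero_iff :
    Subsingleton (Ext M N 0) ↔ Subsingleton (M →ₗ[R] N) :=
  (Ext.addEquiv₀.toEquiv.trans ModuleCat.homEquiv).subsingleton_congr

lemma extVanish_iff_exactAt (P : ProjectiveResolution M) (i : ℕ) :
    ExtVanish R i M N ↔ (P.complex.linearYonedaObj R N).ExactAt i := by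
  rw [HomologicalComplex.exactAt_iff_isZero_homology, ExtVanish,
    ← ModuleCat.isZero_iff_subsingleton]
  exact (P.isoExt i N).isZero_iff

lemma extVanish_zero_iff_subsingleton_linearMap :
    ExtVanish R 0 M N ↔ Subsingleton (M →ₗ[R] N) := by
  let P := projectiveResolution M
  let S := ShortComplex.mk _ _ P.complex_d_comp_π_f_zero
  have epi_g : Epi S.g := inferInstanceAs (Epi (P.π.f 0))
  have exactAt_iff : (P.complex.linearYonedaObj R N).ExactAt 0 ↔
      ∀ f : S.X₂ ⟶ N, S.f ≫ f = 0 → f = 0 := by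
    rw [HomologicalComplex.exactAt_iff' _ 0 0 1 (by simp) (by simp),
      ShortComplex.exact_iff_mono _ ((P.complex.linearYonedaObj R N).shape 0 0 (by simp)),
      ModuleCat.mono_iff_injective]
    exact injective_iff_map_eq_zero _
  have hom_equiv : (S.X₃ ⟶ N) ≃ (M →ₗ[R] N) := ModuleCat.homEquiv
  rw [extVanish_iff_exactAt P, exactAt_iff, ← hom_equiv.subsingleton_congr]
  refine ⟨fun h ↦ subsingleton_of_forall_eq 0 fun g ↦ ?_, fun _ f hf ↦ ?_⟩
  · rw [← cancel_epi S.g, h (S.g ≫ g) (by simp), Limits.comp_zero]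
  · rw [← P.exact₀.g_desc f hf, Subsingleton.elim (P.exact₀.desc f hf) 0, Limits.comp_zero]

/- `ExtVanish` is defined through projective resolutions, whereas the long exact sequences are
available for `Abelian.Ext`. -/
lemma extVanish_iff_subsingleton_ext {i : ℕ} :
    ExtVanish R i M N ↔ Subsingleton (Ext M N i) := by
  cases i with
  | zero => rw [extVanish_zero_iff_subsingleton_linearMap, subsingleton_ext_zero_iff]
  | succ i =>
    let P := projectiveResolution M
    rw [extVanish_iff_exactAt P,
      HomologicalComplex.exactAt_iff' _ i (i + 1) (i + 2) (by simp) (by simp),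
      ShortComplex.moduleCat_exact_iff]
    refine ⟨fun h ↦ subsingleton_of_forall_eq 0 fun α ↦ ?_, fun h f hf ↦ ?_⟩
    · obtain ⟨f, hf, rfl⟩ := P.extMk_surjective α (i + 2) rfl
      exact (P.extMk_eq_zero_iff f (i + 2) rfl hf i rfl).2 (h f hf)
    · exact (P.extMk_eq_zero_iff f (i + 2) rfl hf i rfl).1 (Subsingleton.elim _ _)

lemma mk₀_smul_id_comp (x : R) {i : ℕ} (β : Ext M N i) :
    (Ext.mk₀ (x • 𝟙 M)).comp β (zero_add i) = x • β := by
  rw [Ext.mk₀_smul, Ext.smul_comp, Ext.mk₀_id_comp]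

/- The hypothesis makes multiplication by `x` surjective on the finitely generated module
`Ext M N i`, which therefore vanishes by Nakayama's lemma. -/
lemma subsingleton_ext_of_subsingleton_ext_quotSMulTop [IsNoetherianRing R] [Module.Finite R M]
    [Module.Finite R N] {x : R} (hx : x ∈ Ideal.jacobson (⊥ : Ideal R))
    (reg : IsSMulRegular M x) {i : ℕ}
    [Subsingleton (Ext (ModuleCat.of R (QuotSMulTop x M)) N (i + 1))] :
    Subsingleton (Ext M N i) := by
  have smul_surjective (α : Ext M N i) : ∃ β : Ext M N i, x • β = α := by
    obtain ⟨β, hβ⟩ := Ext.contravariant_sequence_exact₁ reg.smulShortComplex_shortExact N α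
      (add_comm 1 i) (Subsingleton.elim (α := Ext (ModuleCat.of R (QuotSMulTop x M)) N (i + 1)) _ _)
    exact ⟨β, (mk₀_smul_id_comp x β).symm.trans hβ⟩
  by_contra! hne
  refine Submodule.top_ne_pointwise_smul_of_mem_jacobson_annihilator
    (Ideal.jacobson_mono (bot_le (a := Module.annihilator R (Ext M N i))) hx) (top_unique ?_).symm
  intro α _
  obtain ⟨β, rfl⟩ := smul_surjective α
  exact Submodule.smul_mem_pointwise_smul _ _ _ trivial

end ExtVanishing

section InjectiveDimension

variable {R : Type u} [CommRing R] [IsNoetherianRing R] [IsLocalRing R]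

lemma exists_supportDim_eq_natCast (M : Type*) [AddCommGroup M] [Module R M] [Nontrivial M] :
    ∃ d : ℕ, Module.supportDim R M = d := by
  obtain ⟨a, ha⟩ := WithBot.ne_bot_iff_exists.1 (Module.supportDim_ne_bot_of_nontrivial R M)
  have ha_lt : (a : WithBot ℕ∞) < ⊤ :=
    ha.trans_lt ((Module.supportDim_le_ringKrullDim R M).trans_lt ringKrullDim_lt_top)
  obtain ⟨d, rfl⟩ := ENat.ne_top_iff_exists.1 (WithBot.coe_lt_coe.1 ha_lt).ne
  exact ⟨d, ha.symm⟩

lemma exists_mem_maximalIdeal_isSMulRegular {M : Type*} [AddCommGroup M] [Module R M]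
    [Module.Finite R M] (h : Subsingleton (ResidueField R →ₗ[R] M)) :
    ∃ x ∈ maximalIdeal R, IsSMulRegular M x := by
  obtain ⟨x, hx, reg⟩ := IsSMulRegular.subsingleton_linearMap_iff.1 h
  exact ⟨x, Ideal.annihilator_quotient (I := maximalIdeal R) ▸ hx, reg⟩

/- Dividing `M` by a regular element of `𝔪` lowers the dimension by one and raises the projective
dimension by one; once no element of `𝔪` is regular, `k` embeds into the quotient. -/
lemma exists_injective_residueField_projectiveDimension_le (d : ℕ) (M : ModuleCat.{u} R)
    [Module.Finite R M] [Nontrivial M] (hd : Module.supportDim R M = d) :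
    ∃ (N : ModuleCat.{u} R) (f : ResidueField R →ₗ[R] N), Module.Finite R N ∧
      Function.Injective f ∧ projectiveDimension N ≤ projectiveDimension M + d := by
  by_cases h : Subsingleton (ResidueField R →ₗ[R] M)
  · obtain ⟨x, hx, reg⟩ := exists_mem_maximalIdeal_isSMulRegular h
    have hdim := Module.supportDim_quotSMulTop_succ_eq_supportDim reg hx
    have hpd := ModuleCat.projectiveDimension_quotSMulTop_eq_succ_of_isSMulRegular M x reg hx
    have := nontrivial_quotSMulTop_of_mem_maximalIdeal M hx
    obtain ⟨e, he⟩ := exists_supportDim_eq_natCast (R := R) (QuotSMulTop x M)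
    have hed : e + 1 = d := by
      rw [he, hd] at hdim
      exact_mod_cast hdim
    obtain ⟨N, f, hN, hf, hle⟩ :=
      exists_injective_residueField_projectiveDimension_le e (ModuleCat.of R (QuotSMulTop x M)) he
    refine ⟨N, f, hN, hf, hle.trans_eq ?_⟩
    rw [hpd, ← hed, Nat.cast_succ, add_right_comm, add_assoc]
  · have := not_subsingleton_iff_nontrivial.1 h
    obtain ⟨f, hf⟩ := exists_ne (0 : ResidueField R →ₗ[R] M)
    have : IsSimpleModule R (ResidueField R) :=
      isSimpleModule_iff_isCoatom.2 (maximalIdeal.isMaximal R).out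
    exact ⟨M, f, ‹_›, LinearMap.injective_of_ne_zero hf, le_add_of_nonneg_right d.cast_nonneg⟩

variable {N : ModuleCat.{u} R} {i : ℕ}

lemma subsingleton_ext_residueField (hi : ringKrullDim R < i)
    (h : ∀ M : ModuleCat.{u} R, Module.Finite R M → Subsingleton (Ext M N (i + 1))) :
    Subsingleton (Ext (ModuleCat.of R (ResidueField R)) N i) := by
  obtain ⟨d, hd⟩ := exists_supportDim_eq_natCast (R := R) R
  have : Projective (ModuleCat.of R R) :=
    ModuleCat.projective_of_free (Module.Basis.singleton Unit R)
  obtain ⟨L, f, hL, hf, hpd⟩ :=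
    exists_injective_residueField_projectiveDimension_le d (ModuleCat.of R R) hd
  rw [ModuleCat.projectiveDimension_eq_zero_of_projective (ModuleCat.of R R), zero_add, ← hd,
    Module.supportDim_self_eq_ringKrullDim] at hpd
  have : HasProjectiveDimensionLT L i := projectiveDimension_lt_iff.1 (hpd.trans_lt hi)
  have ses : IsSES R (A := ModuleCat.of R (ResidueField R)) (B := L)
      (C := ModuleCat.of R (L ⧸ LinearMap.range f)) f (LinearMap.range f).mkQ :=
    ⟨hf, LinearMap.exact_map_mkQ_range f, Submodule.mkQ_surjective _⟩
  have : Subsingleton (Ext L N i) := HasProjectiveDimensionLT.subsingleton L i i le_rfl N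
  have := h (ModuleCat.of R (L ⧸ LinearMap.range f)) inferInstance
  exact subsingleton_ext_X₁_of_shortExact ses.shortExact

lemma subsingleton_ext_quotient_prime [Module.Finite R N] (p : Ideal R) [p.IsPrime]
    (hi : ringKrullDim R < i)
    (h : ∀ M : ModuleCat.{u} R, Module.Finite R M → Subsingleton (Ext M N (i + 1))) :
    Subsingleton (Ext (ModuleCat.of R (R ⧸ p)) N i) := by
  by_cases hp : maximalIdeal R ≤ p
  · obtain rfl := (maximalIdeal.isMaximal R).eq_of_le Ideal.IsPrime.ne_top' hp
    exact subsingleton_ext_residueField hi h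
  · obtain ⟨x, hx, hxp⟩ := SetLike.not_le_iff_exists.1 hp
    have reg : IsSMulRegular (R ⧸ p) x :=
      (isSMulRegular_quotient_iff_mem_of_smul_mem p x).2 fun _ hy ↦
        (Ideal.IsPrime.mem_or_mem' hy).resolve_left hxp
    have := h (ModuleCat.of R (QuotSMulTop x (R ⧸ p))) inferInstance
    exact subsingleton_ext_of_subsingleton_ext_quotSMulTop (M := ModuleCat.of R (R ⧸ p))
      (maximalIdeal_le_jacobson ⊥ hx) reg

lemma subsingleton_ext_of_subsingleton_ext_succ [Module.Finite R N] (hi : ringKrullDim R < i)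
    (h : ∀ M : ModuleCat.{u} R, Module.Finite R M → Subsingleton (Ext M N (i + 1)))
    (M : ModuleCat.{u} R) [hM : Module.Finite R M] : Subsingleton (Ext M N i) := by
  refine IsNoetherianRing.induction_on_isQuotientEquivQuotientPrime R (M := M) hM
    (motive := fun L _ _ _ ↦ Subsingleton (Ext (ModuleCat.of R L) N i)) ?_ ?_ ?_
  · intro L _ _ _ _
    have := (ModuleCat.isZero_of_subsingleton (ModuleCat.of R L)).hasProjectiveDimensionLT_zero
    exact HasProjectiveDimensionLT.subsingleton (ModuleCat.of R L) 0 i (Nat.zero_le i) N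
  · intro L _ _ _ p e
    have := subsingleton_ext_quotient_prime p.1 hi h
    exact subsingleton_ext_of_iso e.toModuleIso
  · intro A _ _ _ B _ _ _ C _ _ _ f g hf hg hfg hA hC
    have ses : IsSES R (A := ModuleCat.of R A) (B := ModuleCat.of R B) (C := ModuleCat.of R C)
        f g := ⟨hf, hfg, hg⟩
    exact subsingleton_ext_X₂_of_shortExact ses.shortExact

lemma subsingleton_ext_of_ringKrullDim_lt [Module.Finite R N] {n : ℕ}
    (h : ∀ M : ModuleCat.{u} R, Module.Finite R M → ∀ j, n < j → Subsingleton (Ext M N j))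
    (hi : ringKrullDim R < i) (M : ModuleCat.{u} R) [hM : Module.Finite R M] :
    Subsingleton (Ext M N i) := by
  have hij : i ≤ i + n + 1 := by lia
  refine Nat.decreasingInduction (n := i + n + 1)
    (motive := fun j _ ↦
      i ≤ j → ∀ M : ModuleCat.{u} R, Module.Finite R M → Subsingleton (Ext M N j)) ?_ ?_
    hij le_rfl M hM
  · intro j _ ih hij M hM
    exact subsingleton_ext_of_subsingleton_ext_succ (hi.trans_le (by exact_mod_cast hij))
      (ih (by lia)) M
  · exact fun _ M hM ↦ h M hM _ (by lia)

end InjectiveDimension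

section MaximalCohenMacaulay

variable {R : Type u} [CommRing R] [IsLocalRing R]

lemma subsingleton_ext_of_subsingleton_ext_residueField [IsNoetherianRing R]
    {N : ModuleCat.{u} R} [Module.Finite R N] {d t i : ℕ} (hi : d < i + t)
    (hN : ∀ j, d < j → ∀ M : ModuleCat.{u} R, Module.Finite R M → Subsingleton (Ext M N j))
    (M : ModuleCat.{u} R) [Module.Finite R M]
    (hM : ∀ j < t, Subsingleton (Ext (ModuleCat.of R (ResidueField R)) M j)) :
    Subsingleton (Ext M N i) := by
  induction t generalizing M i with
  | zero => exact hN i hi M ‹_›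
  | succ t ih =>
    obtain ⟨x, hx, reg⟩ :=
      exists_mem_maximalIdeal_isSMulRegular (subsingleton_ext_zero_iff.1 (hM 0 t.succ_pos))
    have := ih (i := i + 1) (by lia) (ModuleCat.of R (QuotSMulTop x M)) fun j hj ↦ by
      have : Subsingleton (Ext _ (M.smulShortComplex x).X₂ j) := hM j (by lia)
      have : Subsingleton (Ext _ (M.smulShortComplex x).X₁ (j + 1)) := hM (j + 1) (by lia)
      exact subsingleton_ext_to_X₃_of_shortExact reg.smulShortComplex_shortExact
    exact subsingleton_ext_of_subsingleton_ext_quotSMulTop (maximalIdeal_le_jacobson ⊥ hx) reg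

lemma IsMCM.extVanish_residueField {M : ModuleCat.{u} R} (hM : IsMCM R M) {i : ℕ}
    (hi : (i : WithBot ℕ∞) < ringKrullDim R) :
    ExtVanish R i (ModuleCat.of R (ResidueField R)) M := by
  by_contra h
  have depth_le : moduleDepth R M ≤ i := sInf_le ⟨i, h, rfl⟩
  exact (hi.trans_le hM).not_ge (by exact_mod_cast depth_le)

lemma IsMCM.extVanish [IsNoetherianRing R] (hG : IsGorensteinLocalRing R) {M : ModuleCat.{u} R}
    [Module.Finite R M] (hM : IsMCM R M) {i : ℕ} (hi : 0 < i) :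
    ExtVanish R i M (ModuleCat.of R R) := by
  obtain ⟨n, hn⟩ := hG
  obtain ⟨d, hd⟩ := exists_supportDim_eq_natCast (R := R) R
  rw [Module.supportDim_self_eq_ringKrullDim] at hd
  refine extVanish_iff_subsingleton_ext.2 <|
    subsingleton_ext_of_subsingleton_ext_residueField (d := d) (t := d) (by lia) ?_ M fun j hj ↦
      extVanish_iff_subsingleton_ext.1 (hM.extVanish_residueField (by rw [hd]; exact_mod_cast hj))
  exact fun j hj L _ ↦ subsingleton_ext_of_ringKrullDim_lt
    (fun L hL l hl ↦ extVanish_iff_subsingleton_ext.1 (hn L hL l hl))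
    (by rw [hd]; exact_mod_cast hj) L

end MaximalCohenMacaulay

section Approximation

variable {R : Type u} [CommRing R] {𝒳 : Set (ModuleCat.{u} R)}

lemma IsResolving.prod_mem (h𝒳 : IsResolving R 𝒳) {A B : ModuleCat.{u} R} (hA : A ∈ 𝒳)
    (hB : B ∈ 𝒳) : ModuleCat.of R (A × B) ∈ 𝒳 :=
  h𝒳.extClosed _ _ _ _ _ (isSES_inl_snd A B) hA hB

lemma IsResolving.pi_mem (h𝒳 : IsResolving R 𝒳) {A : ModuleCat.{u} R} (hA : A ∈ 𝒳) (m : ℕ) :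
    ModuleCat.of R (Fin m → A) ∈ 𝒳 := by
  induction m with
  | zero => exact h𝒳.freeMem _ Module.Finite.of_finite (Module.Free.of_subsingleton R _)
  | succ m ih => exact h𝒳.isoClosed (h𝒳.prod_mem hA ih) (Fin.consLinearEquiv R fun _ ↦ A)

lemma exists_linearMap_pi_forall_exists_comp_eq (X K : Type*) [AddCommGroup X] [Module R X]
    [AddCommGroup K] [Module R K] [Module.Finite R (X →ₗ[R] K)] :
    ∃ (m : ℕ) (σ : (Fin m → X) →ₗ[R] K), ∀ δ : X →ₗ[R] K, ∃ γ : X →ₗ[R] (Fin m → X),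
      σ ∘ₗ γ = δ := by
  obtain ⟨m, s, hs⟩ := Module.Finite.exists_fin (R := R) (M := X →ₗ[R] K)
  refine ⟨m, ∑ j, s j ∘ₗ LinearMap.proj j, fun δ ↦ ?_⟩
  obtain ⟨c, rfl⟩ := (Submodule.mem_span_range_iff_exists_fun R).1
    (hs.symm ▸ Submodule.mem_top : δ ∈ Submodule.span R (Set.range s))
  exact ⟨LinearMap.pi fun j ↦ c j • LinearMap.id, by ext; simp⟩

lemma exists_pushout_isSES {W X Y Z : ModuleCat.{u} R} {i : W →ₗ[R] Y} {p : Y →ₗ[R] Z}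
    (ses : IsSES R i p) (h : W →ₗ[R] X) :
    ∃ (P : ModuleCat.{u} R) (a : X →ₗ[R] P) (b : Y →ₗ[R] P) (q : P →ₗ[R] Z),
      IsSES R a q ∧ a ∘ₗ h = b ∘ₗ i ∧ ∀ {M : ModuleCat.{u} R} (f : X →ₗ[R] M) (g : Y →ₗ[R] M),
        f ∘ₗ h = g ∘ₗ i → ∃ l : P →ₗ[R] M, l ∘ₗ a = f ∧ l ∘ₗ b = g := by
  obtain ⟨hi, hip, hp⟩ := ses
  let N : Submodule R (X × Y) := LinearMap.range (h.prod (-i))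
  let q : (X × Y) ⧸ N →ₗ[R] Z := N.liftQ (p ∘ₗ LinearMap.snd R X Y) <| by
    rintro _ ⟨w, rfl⟩
    simp [hip.apply_apply_eq_zero]
  refine ⟨ModuleCat.of R ((X × Y) ⧸ N), N.mkQ ∘ₗ LinearMap.inl R X Y,
    N.mkQ ∘ₗ LinearMap.inr R X Y, q, ⟨?_, fun z ↦ ⟨?_, ?_⟩, fun z ↦ ?_⟩, ?_, ?_⟩
  · refine (injective_iff_map_eq_zero _).2 fun x hx ↦ ?_
    obtain ⟨w, hw⟩ := (Submodule.Quotient.mk_eq_zero N).1 hx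
    obtain ⟨rfl, hiw⟩ := Prod.mk.inj hw
    rw [hi ((neg_eq_zero.1 hiw).trans (map_zero i).symm), map_zero]
  · obtain ⟨⟨x, y⟩, rfl⟩ := N.mkQ_surjective z
    intro hz
    obtain ⟨w, rfl⟩ := (hip y).1 hz
    exact ⟨x + h w, (Submodule.Quotient.eq N).2 ⟨w, by simp⟩⟩
  · rintro ⟨x, rfl⟩
    exact map_zero p
  · obtain ⟨y, rfl⟩ := hp z
    exact ⟨N.mkQ (0, y), rfl⟩
  · ext w
    exact (Submodule.Quotient.eq N).2 ⟨w, by simp⟩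
  · intro M f g hfg
    refine ⟨N.liftQ (f.coprod g) ?_, ?_, ?_⟩
    · rintro _ ⟨w, rfl⟩
      simp [show f (h w) = g (i w) from LinearMap.congr_fun hfg w]
    · ext x
      simp
    · ext y
      simp

lemma IsRightApprox.exists_comp_add_comp_eq (h𝒳 : IsResolving R 𝒳) {W X Y Z M : ModuleCat.{u} R}
    {f : X →ₗ[R] M} (hf : IsRightApprox R 𝒳 f) {i : W →ₗ[R] Y} {p : Y →ₗ[R] Z}
    (ses : IsSES R i p) (hZ : Z ∈ 𝒳) (h : W →ₗ[R] LinearMap.ker f) :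
    ∃ (δ : X →ₗ[R] LinearMap.ker f) (β : Y →ₗ[R] LinearMap.ker f),
      δ ∘ₗ (LinearMap.ker f).subtype ∘ₗ h + β ∘ₗ i = h := by
  obtain ⟨P, a, b, q, sesP, comm, desc⟩ :=
    exists_pushout_isSES ses ((LinearMap.ker f).subtype ∘ₗ h)
  have hP : P ∈ 𝒳 := h𝒳.extClosed X P Z a q sesP hf.1 hZ
  obtain ⟨l, hla, hlb⟩ := desc f 0 (by ext w; simp)
  obtain ⟨H, rfl⟩ := hf.2 P hP l
  have comp_mem_ker (y : Y) : (H ∘ₗ b) y ∈ LinearMap.ker f := LinearMap.congr_fun hlb y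
  have sub_mem_ker (x : X) : x - H (a x) ∈ LinearMap.ker f :=
    (map_sub f _ _).trans (sub_eq_zero.2 (LinearMap.congr_fun hla x).symm)
  refine ⟨(LinearMap.id - H ∘ₗ a).codRestrict _ sub_mem_ker,
    (H ∘ₗ b).codRestrict _ comp_mem_ker, ?_⟩
  ext w
  have hw : a (h w) = b (i w) := LinearMap.congr_fun comm w
  simp [hw]

lemma IsRightApprox.hasRightApprox_ker [IsNoetherianRing R] (h𝒳 : IsResolving R 𝒳)
    (hproj : ∀ W ∈ 𝒳, ∃ (Y Z : ModuleCat.{u} R) (i : W →ₗ[R] Y) (p : Y →ₗ[R] Z),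
      IsSES R i p ∧ Z ∈ 𝒳 ∧ Module.Projective R Y)
    {X M : ModuleCat.{u} R} {f : X →ₗ[R] M} (hf : IsRightApprox R 𝒳 f) :
    HasRightApprox R 𝒳 (ModuleCat.of R (LinearMap.ker f)) := by
  have := h𝒳.finite X hf.1
  obtain ⟨n, π, hπ⟩ := Module.Finite.exists_fin' R (LinearMap.ker f)
  obtain ⟨m, σ, hσ⟩ := exists_linearMap_pi_forall_exists_comp_eq (R := R) X (LinearMap.ker f)
  have free_mem : ModuleCat.of R (Fin n → R) ∈ 𝒳 :=
    h𝒳.freeMem (ModuleCat.of R (Fin n → R)) .pi (.function (Fin n) R R)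
  refine ⟨_, π.coprod σ, h𝒳.prod_mem free_mem (h𝒳.pi_mem hf.1 m), fun W hW h ↦ ?_⟩
  obtain ⟨Y, Z, i, p, ses, hZ, _⟩ := hproj W hW
  obtain ⟨δ, β, hδβ⟩ := hf.exists_comp_add_comp_eq h𝒳 ses hZ h
  obtain ⟨γ, rfl⟩ := hσ δ
  obtain ⟨β, rfl⟩ := Module.projective_lifting_property π β hπ
  refine ⟨(β ∘ₗ i).prod (γ ∘ₗ (LinearMap.ker f).subtype ∘ₗ h), ?_⟩
  rw [LinearMap.coprod_comp_prod, add_comm]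
  exact hδβ

lemma IsRightApprox.memCC {X M : ModuleCat.{u} R} {f : X →ₗ[R] M} (hf : IsRightApprox R 𝒳 f)
    (hker : HasRightApprox R 𝒳 (ModuleCat.of R (LinearMap.ker f))) : MemCC R 𝒳 M := by
  obtain ⟨X₁, g, hX₁, hg⟩ := hker
  refine ⟨X, X₁, (LinearMap.ker f).subtype ∘ₗ g, f, hf.1, hX₁, fun W hW ↦
    ⟨hf.2 W hW, fun h ↦ ⟨fun hh ↦ ?_, ?_⟩⟩⟩
  · obtain ⟨l, hl⟩ := hg W hW (h.codRestrict _ (LinearMap.congr_fun hh))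
    exact ⟨l, congrArg ((LinearMap.ker f).subtype ∘ₗ ·) hl⟩
  · rintro ⟨l, rfl⟩
    ext w
    exact (g (l w)).2

lemma MemCC.hasRightApprox {M : ModuleCat.{u} R} (hM : MemCC R 𝒳 M) : HasRightApprox R 𝒳 M := by
  obtain ⟨X₀, _, _, f, hX₀, _, hf⟩ := hM
  exact ⟨X₀, f, hX₀, fun W hW ↦ (hf W hW).1⟩

end Approximation

theorem stmt17_general (R : Type u) [CommRing R] [IsNoetherianRing R]
    (hARC : ∀ M : ModuleCat.{u} R, Module.Finite R M →
      (∀ i, 0 < i → ExtVanish R i M (ModuleCat.of R (M × R))) → Module.Projective R M)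
    (𝒳 : Set (ModuleCat.{u} R)) (h𝒳 : IsResolving R 𝒳) (hR : ModuleCat.of R R ∈ XPerp R 𝒳)
    (hA : ∀ X ∈ 𝒳, ∃ (Y X' : ModuleCat.{u} R) (f : X →ₗ[R] Y) (g : Y →ₗ[R] X'),
      IsSES R f g ∧ X' ∈ 𝒳 ∧ Y ∈ 𝒳 ∧ Y ∈ XPerp R 𝒳) :
    Coherent R 𝒳 := by
  have projective_of_mem_xPerp {Y : ModuleCat.{u} R} (hY : Y ∈ 𝒳) (hY' : Y ∈ XPerp R 𝒳) :
      Module.Projective R Y := by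
    refine hARC Y hY'.1 fun i hi ↦ extVanish_iff_subsingleton_ext.2 ?_
    have := extVanish_iff_subsingleton_ext.1 (hY'.2 Y hY i hi)
    have := extVanish_iff_subsingleton_ext.1 (hR.2 Y hY i hi)
    exact subsingleton_ext_to_X₂_of_shortExact (isSES_inl_snd Y (ModuleCat.of R R)).shortExact
  refine fun M _ ↦ ⟨MemCC.hasRightApprox, fun ⟨X, f, hf⟩ ↦
    hf.memCC (hf.hasRightApprox_ker h𝒳 fun W hW ↦ ?_)⟩
  obtain ⟨Y, Z, i, p, ses, hZ, hY, hY'⟩ := hA W hW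
  exact ⟨Y, Z, i, p, ses, hZ, projective_of_mem_xPerp hY hY'⟩

/-- Over a henselian Gorenstein local ring satisfying (ARC), a resolving
subcategory consisting of maximal Cohen–Macaulay modules and satisfying condition (A)
is coherent. -/
theorem stmt17 (R : Type u) [CommRing R] [IsNoetherianRing R] [IsLocalRing R]
    [HenselianLocalRing R] (hG : IsGorensteinLocalRing R)
    (hARC : ∀ M : ModuleCat.{u} R, Module.Finite R M →
      (∀ i, 0 < i → ExtVanish R i M (ModuleCat.of R (↥M × R))) → Module.Free R M)
    (𝒳 : Set (ModuleCat.{u} R)) (h𝒳 : IsResolving R 𝒳) (hMCM : ∀ M ∈ 𝒳, IsMCM R M)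
    (hA : ∀ X ∈ 𝒳, ∃ (Y X' : ModuleCat.{u} R) (f : ↥X →ₗ[R] ↥Y) (g : ↥Y →ₗ[R] ↥X'),
      IsSES R f g ∧ X' ∈ 𝒳 ∧ Y ∈ 𝒳 ∧ Y ∈ XPerp R 𝒳) :
    Coherent R 𝒳 :=
  stmt17_general R (fun M hM h ↦ have := hARC M hM h; .of_free) 𝒳 h𝒳
    ⟨.self R, fun X hX _ hi ↦ have := h𝒳.finite X hX; (hMCM X hX).extVanish hG hi⟩ hA
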